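/- Density of the ReLU contextual algebra: let Ω ⊂ ℝ^d be compact and equip P(Ω) with the weak-* topology, so that Ω × P(Ω) is compact. Let A be the set of all functions Ω × P(Ω) → ℝ of the form (x, μ) ↦ Σ_{n=1}^N Π_{t=1}^T γ_{λ_{t,n}}(x, μ), i.e. finite sums of finite pointwise products of elementary contextual maps γ_{λ} with parameters λ = (a, b, c, v) ∈ ℝ^d × ℝ × ℝ × ℝ. Then A is dense in the space of continuous real-valued functions on Ω × P(Ω) for the uniform norm: for every continuous f : Ω × P(Ω) → ℝ and every ε > 0 there exists g ∈ A with sup_{(x,μ) ∈ Ω × P(Ω)} |f(x, μ) − g(x, μ)| ≤ ε. -/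

import Mathlib

/-!
The theorem is Stone–Weierstrass on the compact space `Ω × P(Ω)`, applied to the algebra generated
by the elementary contextual maps.

Each map is jointly continuous, being Lipschitz in `x` uniformly in `μ` and weak-* continuous in `μ`
(`continuous_gammaMap`). Affine maps (`v = 0`) separate distinct points `x`. At a fixed `x`, if two
measures give equal values for all parameters, then for each direction `a` the integrals of
`ReLU (c - ⟪y, a⟫)` agree for every `c`. Difference quotients in `c` converge to the indicator of
`⟪y, a⟫ ≤ c`, so the laws of `⟪y, a⟫` agree (`map_eq_of_integral_ReLU_eq`), and the Cramér–Wold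
principle, via characteristic functions, gives equality of the measures
(`eq_of_integral_ReLU_inner_eq`).

The generated algebra consists exactly of sums of products of elementary maps since the constants
are themselves elementary maps (`a = 0`, `v = 0`); this also absorbs scalars and lets all the products
be padded to a common length.
-/

open MeasureTheory
open scoped RealInnerProductSpace

/-- `ReLU t = max t 0` on the reals. -/
noncomputable def ReLU (t : ℝ) : ℝ := max t 0

/-- The elementary contextual map `γ_{a,b,c,v}(x, μ) = ⟨x, a⟩ + b +
v ∫ ReLU (⟨x, a⟩ - ⟨y, a⟩ + c) dμ(y)` on `Ω × P(Ω)`, with parameter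
`λ = (a, b, c, v) ∈ ℝ^d × ℝ × ℝ × ℝ`. -/
noncomputable def gammaMap (d : ℕ) (Ω : Set (EuclideanSpace ℝ (Fin d)))
    (lam : EuclideanSpace ℝ (Fin d) × ℝ × ℝ × ℝ)
    (x : Ω) (μ : ProbabilityMeasure Ω) : ℝ :=
  ⟪(x : EuclideanSpace ℝ (Fin d)), lam.1⟫ + lam.2.1 +
    lam.2.2.2 * ∫ y : Ω, ReLU (⟪(x : EuclideanSpace ℝ (Fin d)), lam.1⟫
      - ⟪(y : EuclideanSpace ℝ (Fin d)), lam.1⟫ + lam.2.2.1) ∂(μ : Measure Ω)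

lemma continuous_ReLU : Continuous ReLU := continuous_id.max continuous_const

lemma abs_ReLU_sub_le (s t : ℝ) : |ReLU s - ReLU t| ≤ |s - t| :=
  abs_max_sub_max_le_abs s t 0

/-- The difference quotients of `ReLU` from the right converge to the indicator of `0 ≤ s`. -/
lemma tendsto_ReLU_quotient (s : ℝ) :
    Filter.Tendsto (fun n : ℕ => ((n : ℝ) + 1) * (ReLU (s + 1 / ((n : ℝ) + 1)) - ReLU s))
      Filter.atTop (nhds (if 0 ≤ s then 1 else 0)) := by
  refine tendsto_const_nhds.congr' ?_
  split_ifs with hs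
  · refine Filter.Eventually.of_forall fun n => ?_
    have hn : (0 : ℝ) < (n : ℝ) + 1 := by positivity
    have h1 : 0 ≤ s + 1 / ((n : ℝ) + 1) := by positivity
    simp only [ReLU, max_eq_left hs, max_eq_left h1]
    field_simp
    ring
  · push Not at hs
    have h := (tendsto_one_div_add_atTop_nhds_zero_nat (𝕜 := ℝ)).eventually_lt_const
      (neg_pos.2 hs)
    filter_upwards [h] with n hn
    have h1 : s + 1 / ((n : ℝ) + 1) ≤ 0 := by linarith
    simp only [ReLU, max_eq_right hs.le, max_eq_right h1, sub_self, mul_zero]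

section Separation

variable {X : Type*} [TopologicalSpace X] [CompactSpace X] [MeasurableSpace X] [BorelSpace X]

lemma integrable_of_continuous_compact (μ : Measure X) [IsFiniteMeasure μ] {g : X → ℝ}
    (hg : Continuous g) : Integrable g μ :=
  (BoundedContinuousFunction.mkOfCompact ⟨g, hg⟩).integrable μ

lemma tendsto_integral_ReLU_quotient (μ : Measure X) [IsProbabilityMeasure μ]
    {g : X → ℝ} (hg : Continuous g) (s : ℝ) :
    Filter.Tendsto (fun n : ℕ => ((n : ℝ) + 1) *
      (∫ y, ReLU (s + 1 / ((n : ℝ) + 1) - g y) ∂μ - ∫ y, ReLU (s - g y) ∂μ))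
      Filter.atTop (nhds ((μ.map g).real (Set.Iic s))) := by
  have hlim : ∫ y, (if 0 ≤ s - g y then (1 : ℝ) else 0) ∂μ = (μ.map g).real (Set.Iic s) := by
    rw [map_measureReal_apply hg.measurable measurableSet_Iic,
      ← integral_indicator_one (hg.measurable measurableSet_Iic)]
    congr 1 with y
    by_cases hy : g y ≤ s
    · rw [Set.indicator_of_mem (by exact hy), if_pos (sub_nonneg.2 hy), Pi.one_apply]
    · rw [Set.indicator_of_notMem (by exact hy), if_neg (by rwa [sub_nonneg])]
  rw [← hlim]
  have hcont : ∀ c : ℝ, Continuous fun y => ReLU (c - g y) := fun c =>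
    continuous_ReLU.comp (continuous_const.sub hg)
  have hF : ∀ n : ℕ, ((n : ℝ) + 1) *
      (∫ y, ReLU (s + 1 / ((n : ℝ) + 1) - g y) ∂μ - ∫ y, ReLU (s - g y) ∂μ) =
      ∫ y, ((n : ℝ) + 1) * (ReLU (s - g y + 1 / ((n : ℝ) + 1)) - ReLU (s - g y)) ∂μ := by
    intro n
    rw [← integral_sub (integrable_of_continuous_compact μ (hcont _))
      (integrable_of_continuous_compact μ (hcont _)), ← integral_const_mul]
    congr 1 with y
    rw [sub_add_eq_add_sub]
  simp_rw [hF]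
  refine tendsto_integral_of_dominated_convergence (fun _ => (1 : ℝ)) (fun n => ?_)
    (integrable_const _) (fun n => ?_) ?_
  · refine Continuous.aestronglyMeasurable ?_
    exact continuous_const.mul ((continuous_ReLU.comp
      ((continuous_const.sub hg).add continuous_const)).sub (hcont s))
  · refine Filter.Eventually.of_forall fun y => ?_
    have hn : (0 : ℝ) < (n : ℝ) + 1 := by positivity
    have h := abs_ReLU_sub_le (s - g y + 1 / ((n : ℝ) + 1)) (s - g y)
    rw [add_sub_cancel_left, abs_of_pos (by positivity : (0 : ℝ) < 1 / ((n : ℝ) + 1))] at h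
    rw [Real.norm_eq_abs, abs_mul, abs_of_pos hn]
    calc ((n : ℝ) + 1) * _ ≤ ((n : ℝ) + 1) * (1 / ((n : ℝ) + 1)) := by gcongr
      _ = 1 := by field_simp
  · exact Filter.Eventually.of_forall fun y => tendsto_ReLU_quotient (s - g y)

/-- The law of a continuous function `g` is determined by the integrals of `ReLU (c - g)`. -/
lemma map_eq_of_integral_ReLU_eq (μ ν : Measure X) [IsProbabilityMeasure μ]
    [IsProbabilityMeasure ν] {g : X → ℝ} (hg : Continuous g)
    (h : ∀ c : ℝ, ∫ y, ReLU (c - g y) ∂μ = ∫ y, ReLU (c - g y) ∂ν) :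
    μ.map g = ν.map g := by
  have := Measure.isProbabilityMeasure_map (μ := μ) hg.measurable.aemeasurable
  have := Measure.isProbabilityMeasure_map (μ := ν) hg.measurable.aemeasurable
  refine Measure.ext_of_Iic _ _ fun s => ?_
  have hμ := tendsto_integral_ReLU_quotient μ hg s
  simp_rw [h] at hμ
  have := tendsto_nhds_unique hμ (tendsto_integral_ReLU_quotient ν hg s)
  rwa [measureReal_eq_measureReal_iff] at this

end Separation

/-- A Cramér–Wold principle: the integrals of ridge functions `ReLU (c - ⟪y, a⟫)` determine a
probability measure on a compact set. -/
lemma eq_of_integral_ReLU_inner_eq {d : ℕ} {Ω : Set (EuclideanSpace ℝ (Fin d))}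
    [CompactSpace Ω] (μ ν : ProbabilityMeasure Ω)
    (h : ∀ (a : EuclideanSpace ℝ (Fin d)) (c : ℝ),
      ∫ y : Ω, ReLU (c - ⟪(y : EuclideanSpace ℝ (Fin d)), a⟫) ∂(μ : Measure Ω) =
      ∫ y : Ω, ReLU (c - ⟪(y : EuclideanSpace ℝ (Fin d)), a⟫) ∂(ν : Measure Ω))
    (hΩ : MeasurableSet Ω) : μ = ν := by
  have key : (μ : Measure Ω).map Subtype.val = (ν : Measure Ω).map Subtype.val := by
    refine Measure.ext_of_charFun (funext fun a => ?_)
    have hg : Continuous fun y : Ω => ⟪(y : EuclideanSpace ℝ (Fin d)), a⟫ := by fun_prop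
    have hmap := map_eq_of_integral_ReLU_eq (μ : Measure Ω) (ν : Measure Ω) hg (h a)
    -- The characteristic function at `a` depends only on the law of `⟪y, a⟫`.
    have hchar : ∀ ρ : ProbabilityMeasure Ω, charFun ((ρ : Measure Ω).map Subtype.val) a =
        charFun ((ρ : Measure Ω).map
          fun y : Ω => ⟪(y : EuclideanSpace ℝ (Fin d)), a⟫) 1 := by
      intro ρ
      rw [charFun_apply, charFun_apply_real, integral_map measurable_subtype_coe.aemeasurable
        (by fun_prop), integral_map hg.measurable.aemeasurable (by fun_prop)]
      simp
    rw [hchar, hchar, hmap]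
  apply Subtype.ext
  exact (MeasurableEmbedding.subtype_coe hΩ).map_injective key

lemma continuous_gammaMap (d : ℕ) (Ω : Set (EuclideanSpace ℝ (Fin d))) [CompactSpace Ω]
    (lam : EuclideanSpace ℝ (Fin d) × ℝ × ℝ × ℝ) :
    Continuous fun z : Ω × ProbabilityMeasure Ω => gammaMap d Ω lam z.1 z.2 := by
  obtain ⟨a, b, c, v⟩ := lam
  have hcont : ∀ x : Ω, Continuous fun y : Ω => ReLU (⟪(x : EuclideanSpace ℝ (Fin d)), a⟫
      - ⟪(y : EuclideanSpace ℝ (Fin d)), a⟫ + c) := fun x =>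
    continuous_ReLU.comp (by fun_prop)
  have hint : Continuous fun z : Ω × ProbabilityMeasure Ω =>
      ∫ y : Ω, ReLU (⟪(z.1 : EuclideanSpace ℝ (Fin d)), a⟫
        - ⟪(y : EuclideanSpace ℝ (Fin d)), a⟫ + c) ∂(z.2 : Measure Ω) := by
    refine continuous_prod_of_continuous_lipschitzWith _ ‖a‖₊ (fun x => ?_) (fun μ => ?_)
    · exact ProbabilityMeasure.continuous_integral_boundedContinuousFunction
        (BoundedContinuousFunction.mkOfCompact ⟨_, hcont x⟩)
    · refine LipschitzWith.of_dist_le_mul fun x x' => ?_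
      rw [Real.dist_eq, ← integral_sub (integrable_of_continuous_compact _ (hcont x))
        (integrable_of_continuous_compact _ (hcont x')), ← Real.norm_eq_abs]
      refine (norm_integral_le_of_norm_le_const (C := ‖a‖ * dist x x')
        (Filter.Eventually.of_forall fun y => ?_)).trans (by simp)
      refine (abs_ReLU_sub_le _ _).trans ?_
      rw [add_sub_add_right_eq_sub, sub_sub_sub_cancel_right, ← inner_sub_left, mul_comm,
        Subtype.dist_eq, dist_eq_norm]
      exact abs_real_inner_le_norm _ _
  simp only [gammaMap]
  exact ((by fun_prop : Continuous fun z : Ω × ProbabilityMeasure Ω =>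
    ⟪(z.1 : EuclideanSpace ℝ (Fin d)), a⟫ + b)).add (continuous_const.mul hint)

lemma gammaMap_const (d : ℕ) (Ω : Set (EuclideanSpace ℝ (Fin d))) (r : ℝ) (x : Ω)
    (μ : ProbabilityMeasure Ω) : gammaMap d Ω (0, r, 0, 0) x μ = r := by
  simp [gammaMap]

/-- A product over a list, padded to length `T` with a parameter `e` of value `1`. -/
lemma prod_getD_eq {α : Type*} (F : α → ℝ) (e : α) (he : F e = 1) (l : List α) :
    ∀ T : ℕ, l.length ≤ T → ∏ t : Fin T, F (l.getD t e) = (l.map F).prod := by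
  induction l with
  | nil => intro T _; simp [he]
  | cons p l ih =>
    intro T hT
    obtain _ | T := T
    · simp at hT
    · rw [Fin.prod_univ_succ]
      simp only [Fin.val_zero, List.getD_cons_zero, Fin.val_succ, List.getD_cons_succ,
        List.map_cons, List.prod_cons]
      rw [ih T (by simpa using hT)]

/-- Elements of the algebra generated by the elementary contextual maps are sums of products
of such maps, indexed by a list of lists of parameters. -/
lemma exists_lists_of_mem_adjoin {d : ℕ} {Ω : Set (EuclideanSpace ℝ (Fin d))} [CompactSpace Ω]
    {g : C(Ω × ProbabilityMeasure Ω, ℝ)}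
    (hg : g ∈ Algebra.adjoin ℝ (Set.range fun lam =>
      (⟨_, continuous_gammaMap d Ω lam⟩ : C(Ω × ProbabilityMeasure Ω, ℝ)))) :
    ∃ L : List (List (EuclideanSpace ℝ (Fin d) × ℝ × ℝ × ℝ)), ∀ z,
      g z = (L.map fun l => (l.map fun lam => gammaMap d Ω lam z.1 z.2).prod).sum := by
  rw [← Subalgebra.mem_toSubmodule, Algebra.adjoin_eq_span] at hg
  induction hg using Submodule.span_induction with
  | mem g hg =>
    suffices h : ∃ l : List (EuclideanSpace ℝ (Fin d) × ℝ × ℝ × ℝ), ∀ z,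
        g z = (l.map fun lam => gammaMap d Ω lam z.1 z.2).prod by
      obtain ⟨l, hl⟩ := h
      exact ⟨[l], fun z => by simp [hl]⟩
    induction hg using Submonoid.closure_induction with
    | mem g hg =>
      obtain ⟨lam, rfl⟩ := hg
      exact ⟨[lam], fun z => by simp⟩
    | one => exact ⟨[], fun z => by simp⟩
    | mul g g' _ _ h h' =>
      obtain ⟨l, hl⟩ := h
      obtain ⟨l', hl'⟩ := h'
      exact ⟨l ++ l', fun z => by simp [hl, hl']⟩
  | zero => exact ⟨[], fun z => by simp⟩
  | add g g' _ _ h h' =>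
    obtain ⟨L, hL⟩ := h
    obtain ⟨L', hL'⟩ := h'
    exact ⟨L ++ L', fun z => by simp [hL, hL']⟩
  | smul r g _ h =>
    obtain ⟨L, hL⟩ := h
    refine ⟨L.map fun l => (0, r, 0, 0) :: l, fun z => ?_⟩
    rw [ContinuousMap.smul_apply, hL, smul_eq_mul, ← List.sum_map_mul_left, List.map_map]
    simp [Function.comp_def, gammaMap_const]

/-- Density of the ReLU contextual algebra: for compact `Ω ⊂ ℝ^d` (with `P(Ω)` in the
weak-* topology), finite sums of finite pointwise products of elementary contextual maps
uniformly approximate every continuous function on `Ω × P(Ω)` to arbitrary accuracy. -/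
theorem relu_contextual_algebra_dense
    (d : ℕ) (Ω : Set (EuclideanSpace ℝ (Fin d))) (hΩ : IsCompact Ω)
    (f : Ω × ProbabilityMeasure Ω → ℝ) (hf : Continuous f)
    (ε : ℝ) (hε : 0 < ε) :
    ∃ (N T : ℕ) (lam : Fin N → Fin T → EuclideanSpace ℝ (Fin d) × ℝ × ℝ × ℝ),
      ∀ z : Ω × ProbabilityMeasure Ω,
        |f z - ∑ n, ∏ t, gammaMap d Ω (lam n t) z.1 z.2| ≤ ε := by
  have : CompactSpace Ω := isCompact_iff_compactSpace.mp hΩ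
  set A := Algebra.adjoin ℝ (Set.range fun lam =>
      (⟨_, continuous_gammaMap d Ω lam⟩ : C(Ω × ProbabilityMeasure Ω, ℝ))) with hA
  have hsep : A.SeparatesPoints := by
    rintro ⟨x, μ⟩ ⟨x', ν⟩ hne
    -- If no generator separates the two points, then they are equal.
    by_contra hcon
    have hγ : ∀ lam, gammaMap d Ω lam x μ = gammaMap d Ω lam x' ν := by
      intro lam
      by_contra hlam
      exact hcon ⟨_, ⟨_, Algebra.subset_adjoin ⟨lam, rfl⟩, rfl⟩, hlam⟩
    have hx : x = x' := by
      refine Subtype.ext (ext_inner_right ℝ fun a => ?_)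
      simpa [gammaMap] using hγ (a, 0, 0, 0)
    subst hx
    refine hne (Prod.ext rfl (eq_of_integral_ReLU_inner_eq μ ν (fun a c => ?_)
      hΩ.measurableSet))
    -- The shift cancels the term `⟪x, a⟫` inside the `ReLU`.
    have h := hγ (a, 0, c - ⟪(x : EuclideanSpace ℝ (Fin d)), a⟫, 1)
    have hs : ∀ y : Ω, ⟪(x : EuclideanSpace ℝ (Fin d)), a⟫
        - ⟪(y : EuclideanSpace ℝ (Fin d)), a⟫ + (c - ⟪(x : EuclideanSpace ℝ (Fin d)), a⟫)
        = c - ⟪(y : EuclideanSpace ℝ (Fin d)), a⟫ := fun y => by ring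
    simpa [gammaMap, hs] using h
  obtain ⟨⟨g, hgA⟩, hg⟩ :=
    ContinuousMap.exists_mem_subalgebra_near_continuous_of_separatesPoints A hsep f hf ε hε
  obtain ⟨L, hL⟩ := exists_lists_of_mem_adjoin hgA
  -- The total length bounds the length of every product in the sum.
  refine ⟨L.length, (L.map List.length).sum, fun n t => L[n].getD t (0, 1, 0, 0), fun z => ?_⟩
  have hsum : ∑ n : Fin L.length, ∏ t : Fin (L.map List.length).sum,
      gammaMap d Ω (L[n].getD t (0, 1, 0, 0)) z.1 z.2 = g z := by
    rw [show g z = _ from hL z, ← Fin.sum_univ_fun_getElem L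
      fun l => (l.map fun lam => gammaMap d Ω lam z.1 z.2).prod]
    refine Finset.sum_congr rfl fun n _ => ?_
    refine prod_getD_eq (fun lam => gammaMap d Ω lam z.1 z.2) _ (gammaMap_const d Ω 1 _ _) _ _ ?_
    exact List.le_sum_of_mem (List.mem_map_of_mem (List.getElem_mem _))
  rw [hsum, abs_sub_comm]
  exact (hg z).le
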